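/- arXiv:math/0606734 — 2 statements merged into one kernel-verified Lean document; each statement's English description precedes it below -/
import Mathlib

section
/- Let n ≥ 2, let 0 < θ < π/2 and set δ := (π−θ)/2. Let C be a θ-code contained in the closed hemisphere Cap(n,π/2) = {x ∈ S^{n−1} : x_n ≥ 0}. Then |{x ∈ C : dist(x,e) ≥ δ}| + 2·|{x ∈ C : dist(x,e) < δ}| ≤ A(n,θ). -/
noncomputable section

/-- The "North pole" `(0, …, 0, 1)` of the unit sphere in `ℝ^n`. -/
def north (n : ℕ) : EuclideanSpace ℝ (Fin n) :=
  if h : 0 < n then EuclideanSpace.single ⟨n - 1, Nat.sub_lt h Nat.one_pos⟩ 1 else 0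

/-- Angular distance between two points: `arccos ⟨x, y⟩`. -/
def aDist {n : ℕ} (x y : EuclideanSpace ℝ (Fin n)) : ℝ := Real.arccos (inner ℝ x y : ℝ)

/-- A finite set of unit vectors with pairwise angular distance at least `θ`. -/
def IsCode {n : ℕ} (θ : ℝ) (C : Finset (EuclideanSpace ℝ (Fin n))) : Prop :=
  (∀ x ∈ C, ‖x‖ = 1) ∧ ∀ x ∈ C, ∀ y ∈ C, x ≠ y → θ ≤ aDist x y

/-- `A(n, θ)`: maximal size of a `θ`-code on the unit sphere `S^{n-1} ⊂ ℝ^n`. -/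
def sphereMax (n : ℕ) (θ : ℝ) : ℕ :=
  sSup {M | ∃ C : Finset (EuclideanSpace ℝ (Fin n)), IsCode θ C ∧ C.card = M}

/-- `A(n, θ, φ)`: maximal size of a `θ`-code in the cap of angular radius `φ` about the
North pole. -/
def capMax (n : ℕ) (θ φ : ℝ) : ℕ :=
  sSup {M | ∃ C : Finset (EuclideanSpace ℝ (Fin n)), IsCode θ C ∧
    (∀ x ∈ C, aDist x (north n) ≤ φ) ∧ C.card = M}

/-- `A(n, θ, [ψ, φ])`: maximal size of a `θ`-code in the strip `Z(n, [ψ, φ])`. -/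
def stripMax (n : ℕ) (θ ψ φ : ℝ) : ℕ :=
  sSup {M | ∃ C : Finset (EuclideanSpace ℝ (Fin n)), IsCode θ C ∧
    (∀ x ∈ C, ψ ≤ aDist x (north n) ∧ aDist x (north n) ≤ φ) ∧ C.card = M}

/-- `m(n, d)`: maximal number of points in the closed unit ball of `ℝ^n` with pairwise
Euclidean distances at least `d`. -/
def ballMax (n : ℕ) (d : ℝ) : ℕ :=
  sSup {M | ∃ C : Finset (EuclideanSpace ℝ (Fin n)), (∀ x ∈ C, ‖x‖ ≤ 1) ∧
    (∀ x ∈ C, ∀ y ∈ C, x ≠ y → d ≤ dist x y) ∧ C.card = M}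

/-- `ω(θ, α, β) = arccos((cos θ - cos α cos β) / (sin α sin β))`. -/
def omega2 (θ α β : ℝ) : ℝ :=
  Real.arccos ((Real.cos θ - Real.cos α * Real.cos β) / (Real.sin α * Real.sin β))

/-- `ω(θ, α) := ω(θ, α, α)`. -/
def omega1 (θ α : ℝ) : ℝ := omega2 θ α α

end



lemma aux_inner_bd {n : ℕ} {x y : EuclideanSpace ℝ (Fin n)} (hx : ‖x‖ = 1) (hy : ‖y‖ = 1) :
    -1 ≤ (inner ℝ x y : ℝ) ∧ (inner ℝ x y : ℝ) ≤ 1 := by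
  have h := abs_real_inner_le_norm x y
  rw [hx, hy, one_mul] at h
  exact abs_le.mp h

lemma aux_iff {n : ℕ} {x y : EuclideanSpace ℝ (Fin n)} (hx : ‖x‖ = 1) (hy : ‖y‖ = 1)
    {θ : ℝ} (h0 : 0 ≤ θ) (hpi : θ ≤ Real.pi) :
    θ ≤ aDist x y ↔ (inner ℝ x y : ℝ) ≤ Real.cos θ := by
  obtain ⟨h1, h2⟩ := aux_inner_bd hx hy
  unfold aDist
  constructor
  · intro h
    have := Real.cos_le_cos_of_nonneg_of_le_pi h0 (Real.arccos_le_pi _) h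
    rwa [Real.cos_arccos h1 h2] at this
  · intro h
    have := Real.arccos_le_arccos h
    rwa [Real.arccos_cos h0 hpi] at this

lemma aux_bdd (n : ℕ) (θ : ℝ) (hθ : 0 < θ) (hpi : θ < Real.pi / 2) :
    BddAbove {M | ∃ C : Finset (EuclideanSpace ℝ (Fin n)), IsCode θ C ∧ C.card = M} := by
  have hcos : Real.cos θ < 1 := by
    have := Real.cos_lt_cos_of_nonneg_of_le_pi (le_refl 0) (by linarith [Real.pi_pos]) hθ
    rwa [Real.cos_zero] at this
  set ε := 1 - Real.cos θ with hε
  have hε0 : 0 < ε := by linarith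
  have hc0 : 0 < Real.cos θ := Real.cos_pos_of_mem_Ioo ⟨by linarith, hpi⟩
  obtain ⟨t, -, htf, ht⟩ := Metric.finite_approx_of_totallyBounded
    (isCompact_sphere (0 : EuclideanSpace ℝ (Fin n)) 1).totallyBounded (ε / 2) (by linarith)
  refine ⟨htf.toFinset.card, ?_⟩
  rintro M ⟨C, hC, rfl⟩
  have hex : ∀ x ∈ C, ∃ c ∈ t, dist x c < ε / 2 := by
    intro x hx
    have := ht (show x ∈ Metric.sphere 0 1 by simpa using hC.1 x hx)
    simpa using this
  choose! f hf1 hf2 using hex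
  refine Finset.card_le_card_of_injOn f (fun x hx => by simpa using hf1 x hx) ?_
  intro x hx y hy hxy
  by_contra hne
  have h1 := (aux_iff (hC.1 x hx) (hC.1 y hy) hθ.le (by linarith [Real.pi_pos])).1
    (hC.2 x hx y hy hne)
  have hd : dist x y < ε := by
    have ha := hf2 x hx
    have hb := hf2 y hy
    have hc := dist_triangle_right x y (f x)
    rw [← hxy] at hb
    linarith
  rw [dist_eq_norm] at hd
  have h2 := norm_sub_sq_real x y
  rw [hC.1 x hx, hC.1 y hy] at h2
  have h3 := norm_nonneg (x - y)
  nlinarith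

lemma aux_north (n : ℕ) (hn : 2 ≤ n) : ‖north n‖ = 1 := by
  unfold north
  rw [dif_pos (by omega)]
  simp

open Classical in
theorem stmt15 (n : ℕ) (hn : 2 ≤ n) (θ : ℝ) (hθ : 0 < θ) (hθ2 : θ < Real.pi / 2)
    (C : Finset (EuclideanSpace ℝ (Fin n))) (hC : IsCode θ C)
    (hCap : ∀ x ∈ C, aDist x (north n) ≤ Real.pi / 2) :
    (C.filter fun x => (Real.pi - θ) / 2 ≤ aDist x (north n)).card +
        2 * (C.filter fun x => aDist x (north n) < (Real.pi - θ) / 2).card ≤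
      sphereMax n θ := by
  have hpi := Real.pi_pos
  have hθpi : θ ≤ Real.pi := by linarith
  have he := aux_north n hn
  set e := north n with hedef
  clear_value e
  have hee : (inner ℝ e e : ℝ) = 1 := by rw [real_inner_self_eq_norm_sq, he]; norm_num
  let R : EuclideanSpace ℝ (Fin n) → EuclideanSpace ℝ (Fin n) :=
    fun x => x - (2 * (inner ℝ x e : ℝ)) • e
  have hRin : ∀ x y, (inner ℝ (R x) y : ℝ) = inner ℝ x y - 2 * inner ℝ x e * inner ℝ y e := by
    intro x y
    simp only [R, inner_sub_left, inner_smul_left, real_inner_comm y e]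
    simp
  have hRe : ∀ x, (inner ℝ (R x) e : ℝ) = - inner ℝ x e := by
    intro x; rw [hRin, hee]; ring
  have hRR : ∀ x y, (inner ℝ (R x) (R y) : ℝ) = inner ℝ x y := by
    intro x y
    rw [hRin, hRe, real_inner_comm, hRin, real_inner_comm x y]; ring
  have hRnorm : ∀ x, ‖R x‖ = ‖x‖ := by
    intro x
    have := hRR x x
    rw [real_inner_self_eq_norm_sq, real_inner_self_eq_norm_sq] at this
    exact (sq_eq_sq₀ (norm_nonneg _) (norm_nonneg _)).1 this
  have hRinv : ∀ x, R (R x) = x := by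
    intro x
    change R x - (2 * (inner ℝ (R x) e : ℝ)) • e = x
    rw [hRe]; simp only [R]; module
  have hRinj : Function.Injective R := fun x y h => by rw [← hRinv x, h, hRinv]
  have hpos : ∀ x ∈ C, 0 ≤ (inner ℝ x e : ℝ) := by
    intro x hx
    exact Real.arccos_le_pi_div_two.1 (hCap x hx)
  set N := C.filter fun x => aDist x e < (Real.pi - θ) / 2 with hN
  have hs0 : 0 < Real.sin (θ / 2) := Real.sin_pos_of_pos_of_lt_pi (by linarith) (by linarith)
  have hNpos : ∀ x ∈ N, x ∈ C ∧ Real.sin (θ / 2) < (inner ℝ x e : ℝ) := by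
    intro x hx
    rw [hN, Finset.mem_filter] at hx
    refine ⟨hx.1, ?_⟩
    have h := hx.2
    rw [← not_le, aux_iff (hC.1 x hx.1) he (by linarith) (by linarith), not_le] at h
    rwa [show (Real.pi - θ) / 2 = Real.pi / 2 - θ / 2 by ring, Real.cos_pi_div_two_sub] at h
  have hcross : ∀ x ∈ N, ∀ y ∈ C, (inner ℝ (R x) y : ℝ) ≤ Real.cos θ := by
    intro x hx y hy
    obtain ⟨hxC, hxs⟩ := hNpos x hx
    rw [hRin]
    by_cases hxy : x = y
    · subst hxy
      rw [real_inner_self_eq_norm_sq, hC.1 x hxC]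
      have h1 : Real.cos θ = 1 - 2 * Real.sin (θ / 2) ^ 2 := by
        have := Real.cos_two_mul (θ / 2)
        rw [show 2 * (θ / 2) = θ by ring] at this
        nlinarith [Real.sin_sq_add_cos_sq (θ / 2)]
      nlinarith
    · have h1 := (aux_iff (hC.1 x hxC) (hC.1 y hy) hθ.le hθpi).1 (hC.2 x hxC y hy hxy)
      have := mul_nonneg (hpos x hxC) (hpos y hy)
      nlinarith
  have hdisj : Disjoint C (N.image R) := by
    rw [Finset.disjoint_left]
    intro z hz hz'
    obtain ⟨x, hx, rfl⟩ := Finset.mem_image.1 hz'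
    have h1 := hpos _ hz
    rw [hRe] at h1
    linarith [(hNpos x hx).2]
  have hcode : IsCode θ (C ∪ N.image R) := by
    have hunit : ∀ x ∈ C ∪ N.image R, ‖x‖ = 1 := by
      intro x hx
      rcases Finset.mem_union.1 hx with hx | hx
      · exact hC.1 x hx
      · obtain ⟨z, hz, rfl⟩ := Finset.mem_image.1 hx
        rw [hRnorm]; exact hC.1 z (hNpos z hz).1
    refine ⟨hunit, ?_⟩
    intro x hx y hy hxy
    rw [aux_iff (hunit x hx) (hunit y hy) hθ.le hθpi]
    have hCC : ∀ x ∈ C, ∀ y ∈ C, x ≠ y → (inner ℝ x y : ℝ) ≤ Real.cos θ := fun x hx y hy h =>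
      (aux_iff (hC.1 x hx) (hC.1 y hy) hθ.le hθpi).1 (hC.2 x hx y hy h)
    rcases Finset.mem_union.1 hx with hx | hx <;> rcases Finset.mem_union.1 hy with hy | hy
    · exact hCC x hx y hy hxy
    · obtain ⟨z, hz, rfl⟩ := Finset.mem_image.1 hy
      rw [real_inner_comm]; exact hcross z hz x hx
    · obtain ⟨z, hz, rfl⟩ := Finset.mem_image.1 hx
      exact hcross z hz y hy
    · obtain ⟨z, hz, rfl⟩ := Finset.mem_image.1 hx
      obtain ⟨w, hw, rfl⟩ := Finset.mem_image.1 hy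
      rw [hRR]
      exact hCC z (hNpos z hz).1 w (hNpos w hw).1 (fun h => hxy (by rw [h]))
  have hle : (C ∪ N.image R).card ≤ sphereMax n θ :=
    le_csSup (aux_bdd n θ hθ hθ2) ⟨_, hcode, rfl⟩
  rw [Finset.card_union_of_disjoint hdisj, Finset.card_image_of_injective _ hRinj] at hle
  have hsplit := Finset.card_filter_add_card_filter_not (s := C)
    (fun x => aDist x e < (Real.pi - θ) / 2)
  simp only [not_lt] at hsplit
  rw [← hN] at hsplit
  omega
end

section
/- Let n ≥ 3 and 0 < θ < π/2. Then 2·B(n,θ) ≤ A(n−1, arccos(cos θ / cos(θ/2))) + A(n,θ), where A(n−1,·) refers to codes on the unit sphere S^{n−2} ⊂ ℝ^{n−1}. -/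
theorem isCode_iff' {n : ℕ} {θ : ℝ} (h0 : 0 ≤ θ) (h1 : θ ≤ Real.pi)
    (C : Finset (EuclideanSpace ℝ (Fin n))) :
    IsCode θ C ↔ (∀ x ∈ C, ‖x‖ = 1) ∧ ∀ x ∈ C, ∀ y ∈ C, x ≠ y → inner ℝ x y ≤ Real.cos θ := by
  unfold IsCode aDist
  refine and_congr_right fun hC => ?_
  refine forall₂_congr fun x hx => forall₂_congr fun y hy => forall_congr' fun _ => ?_
  have hab : |inner ℝ x y| ≤ 1 := by
    have := abs_real_inner_le_norm x y
    rwa [hC x hx, hC y hy, one_mul] at this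
  constructor
  · intro h
    have := Real.cos_le_cos_of_nonneg_of_le_pi h0 (Real.arccos_le_pi _) h
    rwa [Real.cos_arccos (abs_le.1 hab).1 (abs_le.1 hab).2] at this
  · intro h
    have := Real.arccos_le_arccos h
    rwa [Real.arccos_cos h0 h1] at this

theorem code_bdd {n : ℕ} {θ : ℝ} (h0 : 0 < θ) (h1 : θ ≤ Real.pi) :
    ∃ N : ℕ, ∀ C : Finset (EuclideanSpace ℝ (Fin n)), IsCode θ C → C.card ≤ N := by
  classical
  have hc : Real.cos θ < 1 := by
    have := Real.cos_lt_cos_of_nonneg_of_le_pi le_rfl h1 h0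
    simpa using this
  have hε : 0 < Real.sqrt (2 - 2 * Real.cos θ) := Real.sqrt_pos.2 (by linarith)
  obtain ⟨t, htf, ht⟩ := Metric.totallyBounded_iff.1
    (isCompact_sphere (0 : EuclideanSpace ℝ (Fin n)) 1).totallyBounded _ (half_pos hε)
  refine ⟨htf.toFinset.card, fun C hC => ?_⟩
  rw [isCode_iff' h0.le h1] at hC
  have hex : ∀ x ∈ C, ∃ y ∈ t, dist x y < Real.sqrt (2 - 2 * Real.cos θ) / 2 := by
    intro x hx
    have := ht (show x ∈ Metric.sphere 0 1 by simpa using hC.1 x hx)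
    simpa using this
  choose! f hf hfd using hex
  refine Finset.card_le_card_of_injOn f (fun x hx => by simpa using hf x hx) ?_
  intro x hx y hy hxy
  by_contra hne
  have h1 := hfd x hx
  have h2 := hfd y hy
  rw [← hxy] at h2
  have h3 : dist x y < Real.sqrt (2 - 2 * Real.cos θ) := by
    have := dist_triangle_right x y (f x)
    linarith
  rw [Real.lt_sqrt dist_nonneg, dist_eq_norm, norm_sub_sq_real, hC.1 x hx, hC.1 y hy] at h3
  have := hC.2 x hx y hy hne
  linarith

theorem sphereMax_ge {n : ℕ} {θ : ℝ} (h0 : 0 < θ) (h1 : θ ≤ Real.pi)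
    (C : Finset (EuclideanSpace ℝ (Fin n))) (hC : IsCode θ C) : C.card ≤ sphereMax n θ := by
  obtain ⟨N, hN⟩ := code_bdd (n := n) h0 h1
  refine le_csSup ⟨N, ?_⟩ ⟨C, hC, rfl⟩
  rintro M ⟨D, hD, rfl⟩
  exact hN D hD

/-- projection to the equator hyperplane -/
def projEq {m : ℕ} (x : EuclideanSpace ℝ (Fin (m + 1))) : EuclideanSpace ℝ (Fin m) :=
  WithLp.toLp 2 fun i => x i.castSucc

/-- reflection in the equator hyperplane -/
def reflEq {m : ℕ} (x : EuclideanSpace ℝ (Fin (m + 1))) : EuclideanSpace ℝ (Fin (m + 1)) :=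
  WithLp.toLp 2 (Fin.snoc (α := fun _ => ℝ) (fun i => x i.castSucc) (-x (Fin.last m)))

theorem inner_projEq {m : ℕ} (x y : EuclideanSpace ℝ (Fin (m + 1))) :
    inner ℝ (projEq x) (projEq y) = inner ℝ x y - x (Fin.last m) * y (Fin.last m) := by
  simp [projEq, PiLp.inner_apply, Fin.sum_univ_castSucc]
  ring

theorem inner_reflEq {m : ℕ} (x y : EuclideanSpace ℝ (Fin (m + 1))) :
    inner ℝ x (reflEq y) = inner ℝ x y - 2 * (x (Fin.last m) * y (Fin.last m)) := by
  simp [reflEq, PiLp.inner_apply, Fin.sum_univ_castSucc]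
  ring

theorem inner_reflEq_reflEq {m : ℕ} (x y : EuclideanSpace ℝ (Fin (m + 1))) :
    inner ℝ (reflEq x) (reflEq y) = inner ℝ x y := by
  simp [reflEq, PiLp.inner_apply, Fin.sum_univ_castSucc]

theorem norm_reflEq {m : ℕ} (x : EuclideanSpace ℝ (Fin (m + 1))) : ‖reflEq x‖ = ‖x‖ := by
  rw [norm_eq_sqrt_real_inner, inner_reflEq_reflEq, ← norm_eq_sqrt_real_inner]

theorem inner_north {m : ℕ} (x : EuclideanSpace ℝ (Fin (m + 1))) :
    inner ℝ x (north (m + 1)) = x (Fin.last m) := by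
  have : (⟨m + 1 - 1, Nat.sub_lt (Nat.succ_pos m) Nat.one_pos⟩ : Fin (m + 1)) = Fin.last m := by
    ext; simp
  simp [north, EuclideanSpace.inner_single_right]
  rfl

theorem le_of_sq_le_sq_aux {a b : ℝ} (h : a ^ 2 ≤ b ^ 2) (hb : 0 ≤ b) : a ≤ b :=
  abs_le_of_sq_le_sq' h hb |>.2

/-- the key inequality -/
theorem key_aux {a b c k p q i : ℝ} (ha : 0 ≤ a) (hab : a ≤ b) (hc : 0 < c) (hc1 : c < 1)
    (hk : 0 < k) (hp : 0 < p) (hq : 0 < q) (hp2 : p ^ 2 = 1 - a ^ 2) (hkq : k ≤ q)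
    (hi : i ≤ c) : (i - a * b) ≤ c / k * (p * q) := by
  have h1 : c - a * b ≤ c * p := by
    rcases le_or_gt (c - a * b) 0 with h | h
    · exact h.trans (by positivity)
    · refine le_of_sq_le_sq_aux ?_ (by positivity)
      rw [mul_pow, hp2]
      have h2 : a * b ^ 2 ≤ b * c := by nlinarith
      have h3 : a * c ^ 2 ≤ b * c := by
        have : a * c ≤ b := by nlinarith
        nlinarith
      nlinarith
  have h2 : c * p ≤ c / k * (p * q) := by
    have : c / k * (p * q) = c * p * (q / k) := by ring
    rw [this]
    exact le_mul_of_one_le_right (by positivity) ((one_le_div hk).2 hkq)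
  linarith

theorem key_ineq {a b c k p q i : ℝ} (ha : 0 ≤ a) (hb : 0 ≤ b) (hc : 0 < c) (hc1 : c < 1)
    (hk : 0 < k) (hp : 0 < p) (hq : 0 < q) (hp2 : p ^ 2 = 1 - a ^ 2) (hq2 : q ^ 2 = 1 - b ^ 2)
    (hkp : k ≤ p) (hkq : k ≤ q)
    (hi : i ≤ c) : (i - a * b) ≤ c / k * (p * q) := by
  rcases le_total a b with h | h
  · exact key_aux ha h hc hc1 hk hp hq hp2 hkq hi
  · have := key_aux hb h hc hc1 hk hq hp hq2 hkp hi
    rwa [mul_comm b a, mul_comm q p] at this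

theorem stmt16 (n : ℕ) (hn : 3 ≤ n) (θ : ℝ) (hθ : 0 < θ) (hθ2 : θ < Real.pi / 2) :
    2 * capMax n θ (Real.pi / 2) ≤
      sphereMax (n - 1) (Real.arccos (Real.cos θ / Real.cos (θ / 2))) + sphereMax n θ := by
  classical
  obtain ⟨m, rfl⟩ : ∃ m, n = m + 1 := ⟨n - 1, by omega⟩
  have hpi := Real.pi_pos
  have hc0 : 0 < Real.cos θ := Real.cos_pos_of_mem_Ioo ⟨by linarith, hθ2⟩
  have hk0 : 0 < Real.cos (θ / 2) := Real.cos_pos_of_mem_Ioo ⟨by linarith, by linarith⟩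
  have hs0 : 0 < Real.sin (θ / 2) := Real.sin_pos_of_pos_of_lt_pi (by linarith) (by linarith)
  have hck : Real.cos θ < Real.cos (θ / 2) :=
    Real.cos_lt_cos_of_nonneg_of_le_pi (by linarith) (by linarith) (by linarith)
  have hk1 := Real.cos_le_one (θ / 2)
  have hsk := Real.sin_sq_add_cos_sq (θ / 2)
  have hdbl : Real.cos θ = 1 - 2 * Real.sin (θ / 2) ^ 2 := by
    have := Real.cos_two_mul (θ / 2)
    rw [show 2 * (θ / 2) = θ by ring] at this
    linarith
  have hr1 : Real.cos θ / Real.cos (θ / 2) < 1 := (div_lt_one hk0).2 hck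
  have hr0 : 0 < Real.cos θ / Real.cos (θ / 2) := by positivity
  have hω0 : 0 < Real.arccos (Real.cos θ / Real.cos (θ / 2)) := Real.arccos_pos.2 hr1
  have hωπ := Real.arccos_le_pi (Real.cos θ / Real.cos (θ / 2))
  have hcosω := Real.cos_arccos (x := Real.cos θ / Real.cos (θ / 2)) (by linarith) hr1.le
  obtain ⟨C, hC, hcap, hcard⟩ : capMax (m + 1) θ (Real.pi / 2) ∈
      {M | ∃ C : Finset (EuclideanSpace ℝ (Fin (m + 1))), IsCode θ C ∧
        (∀ x ∈ C, aDist x (north (m + 1)) ≤ Real.pi / 2) ∧ C.card = M} := by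
    refine Nat.sSup_mem ⟨0, ∅, by simp [IsCode], by simp, rfl⟩ ?_
    obtain ⟨N, hN⟩ := code_bdd (n := m + 1) hθ (by linarith)
    refine ⟨N, ?_⟩
    rintro M ⟨D, hD, -, rfl⟩
    exact hN D hD
  rw [← hcard]
  rw [isCode_iff' hθ.le (by linarith)] at hC
  obtain ⟨hC1, hC2⟩ := hC
  have hpos : ∀ x ∈ C, 0 ≤ x (Fin.last m) := by
    intro x hx
    have := hcap x hx
    rwa [aDist, inner_north, Real.arccos_le_pi_div_two] at this
  have hself : ∀ x ∈ C, inner ℝ x x = (1 : ℝ) := by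
    intro x hx
    rw [real_inner_self_eq_norm_sq, hC1 x hx, one_pow]
  set T := C.filter fun x => Real.sin (θ / 2) ≤ x (Fin.last m) with hT
  set S := C.filter fun x => ¬ Real.sin (θ / 2) ≤ x (Fin.last m) with hS
  have hST : T.card + S.card = C.card := Finset.card_filter_add_card_filter_not _
  -- the upper part together with its mirror image
  have hcross : ∀ x ∈ C, ∀ y ∈ T, inner ℝ x (reflEq y) ≤ Real.cos θ := by
    intro x hx y hy
    obtain ⟨hyC, hys⟩ := Finset.mem_filter.1 hy
    rw [inner_reflEq]
    by_cases h : x = y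
    · subst h
      rw [hself x hx]
      nlinarith
    · have := hC2 x hx y hyC h
      have := mul_nonneg (hpos x hx) (hpos y hyC)
      linarith
  have hrinj : Function.Injective (reflEq (m := m)) := by
    intro x y h
    have h1 : ∀ z, inner ℝ (x - y) z = (0 : ℝ) := by
      intro z
      rw [inner_sub_left, ← inner_reflEq_reflEq x, ← inner_reflEq_reflEq y, h, sub_self]
    exact sub_eq_zero.1 (inner_self_eq_zero.1 (h1 (x - y)))
  have hTc : C.card + T.card ≤ sphereMax (m + 1) θ := by
    have hd : Disjoint C (T.image reflEq) := by
      rw [Finset.disjoint_left]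
      intro x hx hx'
      obtain ⟨y, hy, rfl⟩ := Finset.mem_image.1 hx'
      have h1 := hcross _ hx y hy
      rw [hself _ hx] at h1
      linarith
    rw [← Finset.card_image_of_injective T hrinj, ← Finset.card_union_of_disjoint hd]
    refine sphereMax_ge hθ (by linarith) _ ?_
    rw [isCode_iff' hθ.le (by linarith)]
    have hTC : ∀ x ∈ T, x ∈ C := fun x hx => (Finset.mem_filter.1 hx).1
    refine ⟨?_, ?_⟩
    · intro x hx
      rcases Finset.mem_union.1 hx with hx | hx
      · exact hC1 x hx
      · obtain ⟨y, hy, rfl⟩ := Finset.mem_image.1 hx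
        rw [norm_reflEq, hC1 y (hTC y hy)]
    · intro x hx y hy hxy
      rcases Finset.mem_union.1 hx with hx | hx
      · rcases Finset.mem_union.1 hy with hy | hy
        · exact hC2 x hx y hy hxy
        · obtain ⟨y, hyy, rfl⟩ := Finset.mem_image.1 hy
          exact hcross x hx y hyy
      · obtain ⟨x, hxx, rfl⟩ := Finset.mem_image.1 hx
        rcases Finset.mem_union.1 hy with hy | hy
        · rw [real_inner_comm]
          exact hcross y hy x hxx
        · obtain ⟨y, hyy, rfl⟩ := Finset.mem_image.1 hy
          rw [inner_reflEq_reflEq]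
          exact hC2 x (hTC x hxx) y (hTC y hyy) fun h => hxy (by rw [h])
  -- the lower part, projected to the equator
  have hSc : S.card ≤ sphereMax m (Real.arccos (Real.cos θ / Real.cos (θ / 2))) := by
    have hnsq : ∀ x ∈ S, ‖projEq x‖ ^ 2 = 1 - x (Fin.last m) ^ 2 := by
      intro x hx
      rw [← real_inner_self_eq_norm_sq, inner_projEq, hself x (Finset.mem_filter.1 hx).1]
      ring
    have hnk : ∀ x ∈ S, Real.cos (θ / 2) ≤ ‖projEq x‖ := by
      intro x hx
      refine le_of_sq_le_sq_aux ?_ (norm_nonneg _)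
      rw [hnsq x hx]
      obtain ⟨hxC, hxs⟩ := Finset.mem_filter.1 hx
      have := hpos x hxC
      nlinarith
    set g : EuclideanSpace ℝ (Fin (m + 1)) → EuclideanSpace ℝ (Fin m) :=
      fun x => (‖projEq x‖)⁻¹ • projEq x with hg
    have hg1 : ∀ x ∈ S, ‖g x‖ = 1 := by
      intro x hx
      have := hk0.trans_le (hnk x hx)
      rw [hg]
      simp only [norm_smul, norm_inv, norm_norm]
      exact inv_mul_cancel₀ this.ne'
    have hg2 : ∀ x ∈ S, ∀ y ∈ S, x ≠ y →
        inner ℝ (g x) (g y) ≤ Real.cos θ / Real.cos (θ / 2) := by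
      intro x hx y hy hxy
      have hp := hk0.trans_le (hnk x hx)
      have hq := hk0.trans_le (hnk y hy)
      have hxC := (Finset.mem_filter.1 hx).1
      have hyC := (Finset.mem_filter.1 hy).1
      have key := key_ineq (hpos x hxC) (hpos y hyC) hc0 (hck.trans_le hk1) hk0 hp hq
        (hnsq x hx) (hnsq y hy) (hnk x hx) (hnk y hy) (hC2 x hxC y hyC hxy)
      rw [← inner_projEq] at key
      simp only [hg, real_inner_smul_left, real_inner_smul_right]
      rw [← mul_assoc, ← mul_inv, inv_mul_eq_div, div_le_iff₀ (by positivity)]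
      rw [mul_comm ‖projEq y‖]
      exact key
    have hinj : Set.InjOn g S := by
      intro x hx y hy h
      by_contra hne
      have h1 := hg2 x hx y hy hne
      rw [← h, real_inner_self_eq_norm_sq, hg1 x hx] at h1
      linarith
    rw [← Finset.card_image_of_injOn hinj]
    refine sphereMax_ge hω0 hωπ _ ?_
    rw [isCode_iff' hω0.le hωπ, hcosω]
    refine ⟨?_, ?_⟩
    · intro x hx
      obtain ⟨x, hxx, rfl⟩ := Finset.mem_image.1 hx
      exact hg1 x hxx
    · intro x hx y hy hxy
      obtain ⟨x, hxx, rfl⟩ := Finset.mem_image.1 hx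
      obtain ⟨y, hyy, rfl⟩ := Finset.mem_image.1 hy
      exact hg2 x hxx y hyy fun h => hxy (by rw [h])
  rw [Nat.add_sub_cancel]
  omega
end
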